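/- arXiv:2412.00261 — 2 statements merged into one kernel-verified Lean document; each statement's English description precedes it below -/
import Mathlib

section
/- Let n = k·s with k ≥ 1 blocks of size s ≥ 1, let J be the all-ones n×n matrix and B the block-diagonal matrix with k diagonal all-ones s×s blocks, and let A = q·J + (p−q)·B with p > q ≥ 0 and p > 0. Then every degree equals d = s·p + (k−1)·s·q, the transition matrix M = D⁻¹A = (1/d)A is row-stochastic, and for every t ≥ 1 its t-th power has the closed form M^t = c_t·J + s^{t−1}·((p−q)/d)^t·B, where c_t = (1 − s^t((p−q)/d)^t)/n. -/
open Matrix BigOperators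

/-!
Averaging over all vertices is an idempotent `P`, averaging over each block is an idempotent `Q`,
and `P * Q = Q * P = P`. Hence `P` and `Q - P` are orthogonal idempotents. Since `J` and `B` are
multiples of `P` and `Q`, the transition matrix is `P + r • (Q - P)` with `r = s (p - q) / d`,
and its `t`-th power is `P + r ^ t • (Q - P)`.
-/

open scoped Kronecker

theorem add_smul_pow_of_orthogonal_idempotents {R S : Type*} [CommSemiring R] [Semiring S]
    [Algebra R S] {e f : S} (he : IsIdempotentElem e) (hf : IsIdempotentElem f)
    (hef : e * f = 0) (hfe : f * e = 0) (r : R) {t : ℕ} (ht : t ≠ 0) :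
    (e + r • f) ^ t = e + r ^ t • f := by
  induction t, Nat.one_le_iff_ne_zero.mpr ht using Nat.le_induction with
  | base => simp only [pow_one]
  | succ t one_le_t ih =>
    rw [pow_succ, ih (Nat.one_le_iff_ne_zero.mp one_le_t), pow_succ]
    simp only [add_mul, mul_add, mul_smul_comm, smul_mul_assoc, he.eq, hf.eq, hef, hfe, smul_zero,
      add_zero, zero_add, smul_smul, mul_comm]

section Matrices

variable {n 𝕜 : Type*} [Fintype n] [DecidableEq n] [Field 𝕜]

theorem inv_smul_one_mul (d : 𝕜) (A : Matrix n n 𝕜) :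
    (d • (1 : Matrix n n 𝕜))⁻¹ * A = d⁻¹ • A := by
  obtain rfl | hd := eq_or_ne d 0
  · simp
  · have hinv : (d • (1 : Matrix n n 𝕜))⁻¹ = d⁻¹ • 1 := inv_eq_left_inv (by simp [smul_smul, hd])
    rw [hinv, smul_one_mul]

theorem inv_smul_mem_rowStochastic [LinearOrder 𝕜] [IsStrictOrderedRing 𝕜] {A : Matrix n n 𝕜}
    {d : 𝕜} (hA : ∀ i j, 0 ≤ A i j) (hd : d ≠ 0) (hsum : ∀ i, ∑ j, A i j = d) :
    d⁻¹ • A ∈ rowStochastic 𝕜 n := by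
  refine mem_rowStochastic_iff_sum.mpr ⟨fun i j => ?_, fun i => ?_⟩
  · have hd_nonneg : 0 ≤ d := hsum i ▸ Finset.sum_nonneg fun j _ => hA i j
    exact mul_nonneg (inv_nonneg.mpr hd_nonneg) (hA i j)
  · simp only [Matrix.smul_apply, smul_eq_mul, ← Finset.mul_sum, hsum, inv_mul_cancel₀ hd]

end Matrices

/-- The all-ones matrix `J`. -/
def allOnes (n 𝕜 : Type*) [One 𝕜] : Matrix n n 𝕜 :=
  of fun _ _ => 1

/-- The block-diagonal matrix `B` with all-ones diagonal blocks. The vertex `(i, a)` is the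
`a`-th vertex of block `i`. -/
def blockOnes (ι κ 𝕜 : Type*) [DecidableEq ι] [Zero 𝕜] [One 𝕜] : Matrix (ι × κ) (ι × κ) 𝕜 :=
  of fun u v => if u.1 = v.1 then 1 else 0

theorem allOnes_mul_allOnes (n 𝕜 : Type*) [Fintype n] [Semiring 𝕜] :
    allOnes n 𝕜 * allOnes n 𝕜 = (Fintype.card n : 𝕜) • allOnes n 𝕜 := by
  ext i j
  simp [allOnes, mul_apply]

theorem sum_blockOnes_row {ι κ : Type*} (𝕜 : Type*) [Fintype ι] [DecidableEq ι] [Fintype κ]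
    [Semiring 𝕜] (u : ι × κ) : ∑ v, blockOnes ι κ 𝕜 u v = Fintype.card κ := by
  rw [Fintype.sum_prod_type_right]
  simp [blockOnes]

section Averaging

/-- The matrix of the operator replacing a vector by its mean. It is zero when the cardinality of
`n` vanishes in `𝕜`. -/
def averaging (n 𝕜 : Type*) [Fintype n] [Field 𝕜] : Matrix n n 𝕜 :=
  (Fintype.card n : 𝕜)⁻¹ • allOnes n 𝕜

/-- The matrix of the operator replacing a vector by its mean on each block. -/
def blockAveraging (ι κ 𝕜 : Type*) [DecidableEq ι] [Fintype κ] [Field 𝕜] :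
    Matrix (ι × κ) (ι × κ) 𝕜 :=
  (1 : Matrix ι ι 𝕜) ⊗ₖ averaging κ 𝕜

variable (n ι κ 𝕜 : Type*) [Fintype n] [Fintype κ] [Field 𝕜]

theorem isIdempotentElem_averaging : IsIdempotentElem (averaging n 𝕜) := by
  rw [IsIdempotentElem, averaging, smul_mul_smul_comm, allOnes_mul_allOnes, smul_smul,
    mul_right_comm]
  congr 1
  simpa only [inv_inv] using mul_inv_mul_cancel (Fintype.card n : 𝕜)⁻¹

theorem averaging_prod [Fintype ι] : averaging (ι × κ) 𝕜 = averaging ι 𝕜 ⊗ₖ averaging κ 𝕜 := by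
  ext u v
  simp [averaging, allOnes, mul_comm]

variable [DecidableEq ι]

theorem blockAveraging_eq_smul_blockOnes :
    blockAveraging ι κ 𝕜 = (Fintype.card κ : 𝕜)⁻¹ • blockOnes ι κ 𝕜 := by
  ext u v
  simp [blockAveraging, averaging, allOnes, blockOnes, one_apply]

variable [Fintype ι]

theorem isIdempotentElem_blockAveraging : IsIdempotentElem (blockAveraging ι κ 𝕜) := by
  rw [IsIdempotentElem, blockAveraging, ← mul_kronecker_mul, one_mul,
    (isIdempotentElem_averaging κ 𝕜).eq]

theorem averaging_mul_blockAveraging :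
    averaging (ι × κ) 𝕜 * blockAveraging ι κ 𝕜 = averaging (ι × κ) 𝕜 := by
  rw [averaging_prod, blockAveraging, ← mul_kronecker_mul, mul_one,
    (isIdempotentElem_averaging κ 𝕜).eq]

theorem blockAveraging_mul_averaging :
    blockAveraging ι κ 𝕜 * averaging (ι × κ) 𝕜 = averaging (ι × κ) 𝕜 := by
  rw [averaging_prod, blockAveraging, ← mul_kronecker_mul, one_mul,
    (isIdempotentElem_averaging κ 𝕜).eq]

variable {𝕜}

theorem averaging_add_smul_blockAveraging_sub_pow [DecidableEq κ] (r : 𝕜) {t : ℕ} (ht : t ≠ 0) :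
    (averaging (ι × κ) 𝕜 + r • (blockAveraging ι κ 𝕜 - averaging (ι × κ) 𝕜)) ^ t =
      averaging (ι × κ) 𝕜 + r ^ t • (blockAveraging ι κ 𝕜 - averaging (ι × κ) 𝕜) := by
  have hP := isIdempotentElem_averaging (ι × κ) 𝕜
  have hPQ := averaging_mul_blockAveraging ι κ 𝕜
  have hQP := blockAveraging_mul_averaging ι κ 𝕜
  refine add_smul_pow_of_orthogonal_idempotents hP
    (hP.sub (isIdempotentElem_blockAveraging ι κ 𝕜) hPQ hQP) ?_ ?_ r ht
  · rw [mul_sub, hPQ, hP.eq, sub_self]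
  · rw [sub_mul, hQP, hP.eq, sub_self]

end Averaging

section SBM

/-- The expected adjacency matrix `A` of the planted partition model with blocks indexed by `ι`,
each a copy of `κ`, with intra-block density `p` and inter-block density `q`. -/
def sbmAdjacency (ι κ : Type*) {𝕜 : Type*} [DecidableEq ι] [Ring 𝕜] (p q : 𝕜) :
    Matrix (ι × κ) (ι × κ) 𝕜 :=
  q • allOnes (ι × κ) 𝕜 + (p - q) • blockOnes ι κ 𝕜

/-- The common row sum `d` of `sbmAdjacency ι κ p q`, i.e. the expected degree of a vertex. The
subtraction takes place in `𝕜`. -/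
def sbmDegree (ι κ : Type*) {𝕜 : Type*} [Fintype ι] [Fintype κ] [Ring 𝕜] (p q : 𝕜) : 𝕜 :=
  Fintype.card κ * p + (Fintype.card ι - 1) * Fintype.card κ * q

/-- The transition matrix `M = D⁻¹ A` of the random walk, where `D` is the diagonal matrix of
expected degrees. -/
noncomputable def sbmTransition (ι κ : Type*) {𝕜 : Type*} [Fintype ι] [DecidableEq ι] [Fintype κ]
    [DecidableEq κ] [CommRing 𝕜] (p q : 𝕜) : Matrix (ι × κ) (ι × κ) 𝕜 :=
  (sbmDegree ι κ p q • (1 : Matrix (ι × κ) (ι × κ) 𝕜))⁻¹ * sbmAdjacency ι κ p q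

variable {ι κ 𝕜 : Type*}

theorem card_block_ne_zero_of_sbmDegree_ne_zero [Fintype ι] [Fintype κ] [Ring 𝕜] {p q : 𝕜}
    (hd : sbmDegree ι κ p q ≠ 0) : (Fintype.card κ : 𝕜) ≠ 0 :=
  fun hκ => hd (by simp [sbmDegree, hκ])

theorem sbmDegree_pos [Fintype ι] [Fintype κ] [Ring 𝕜] [LinearOrder 𝕜]
    [IsStrictOrderedRing 𝕜] {p q : 𝕜} [Nonempty ι] [Nonempty κ] (hp : 0 < p) (hq : 0 ≤ q) :
    0 < sbmDegree ι κ p q := by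
  have hι : (1 : 𝕜) ≤ Fintype.card ι := Nat.one_le_cast.mpr Fintype.card_pos
  have hκ : (0 : 𝕜) < Fintype.card κ := Nat.cast_pos.mpr Fintype.card_pos
  exact add_pos_of_pos_of_nonneg (mul_pos hκ hp)
    (mul_nonneg (mul_nonneg (sub_nonneg.mpr hι) hκ.le) hq)

variable [DecidableEq ι]

theorem sbmAdjacency_apply [Ring 𝕜] (p q : 𝕜) (u v : ι × κ) :
    sbmAdjacency ι κ p q u v = if u.1 = v.1 then p else q := by
  by_cases h : u.1 = v.1 <;> simp [sbmAdjacency, allOnes, blockOnes, h]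

variable [Fintype ι] [Fintype κ]

theorem sum_sbmAdjacency_row [CommRing 𝕜] (p q : 𝕜) (u : ι × κ) :
    ∑ v, sbmAdjacency ι κ p q u v = sbmDegree ι κ p q := by
  calc ∑ v, sbmAdjacency ι κ p q u v
      = Fintype.card ι * Fintype.card κ * q + (p - q) * Fintype.card κ := by
        simp [sbmAdjacency, allOnes, Finset.sum_add_distrib, ← Finset.mul_sum, sum_blockOnes_row]
    _ = sbmDegree ι κ p q := by
        rw [sbmDegree]
        ring

variable [Field 𝕜] {p q : 𝕜}

theorem sbmAdjacency_eq_smul_averaging_add (hι : (Fintype.card ι : 𝕜) ≠ 0)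
    (hκ : (Fintype.card κ : 𝕜) ≠ 0) :
    sbmAdjacency ι κ p q = sbmDegree ι κ p q • averaging (ι × κ) 𝕜 +
      (Fintype.card κ * (p - q)) • (blockAveraging ι κ 𝕜 - averaging (ι × κ) 𝕜) := by
  rw [sbmAdjacency, sbmDegree, blockAveraging_eq_smul_blockOnes, averaging, Fintype.card_prod,
    Nat.cast_mul]
  match_scalars <;> field_simp
  ring

variable [DecidableEq κ]

theorem sbmTransition_eq_inv_smul :
    sbmTransition ι κ p q = (sbmDegree ι κ p q)⁻¹ • sbmAdjacency ι κ p q :=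
  inv_smul_one_mul _ _

theorem sbmTransition_eq_averaging_add (hι : (Fintype.card ι : 𝕜) ≠ 0)
    (hd : sbmDegree ι κ p q ≠ 0) :
    sbmTransition ι κ p q = averaging (ι × κ) 𝕜 +
      (Fintype.card κ * ((p - q) / sbmDegree ι κ p q)) •
        (blockAveraging ι κ 𝕜 - averaging (ι × κ) 𝕜) := by
  rw [sbmTransition_eq_inv_smul,
    sbmAdjacency_eq_smul_averaging_add hι (card_block_ne_zero_of_sbmDegree_ne_zero hd), smul_add,
    inv_smul_smul₀ hd, smul_smul]
  congr 2
  ring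

theorem sbmTransition_pow (hι : (Fintype.card ι : 𝕜) ≠ 0) (hd : sbmDegree ι κ p q ≠ 0)
    {t : ℕ} (ht : t ≠ 0) :
    sbmTransition ι κ p q ^ t =
      ((1 - (Fintype.card κ : 𝕜) ^ t * ((p - q) / sbmDegree ι κ p q) ^ t) /
          (Fintype.card ι * Fintype.card κ)) • allOnes (ι × κ) 𝕜 +
        ((Fintype.card κ : 𝕜) ^ (t - 1) * ((p - q) / sbmDegree ι κ p q) ^ t) •
          blockOnes ι κ 𝕜 := by
  have hκ := card_block_ne_zero_of_sbmDegree_ne_zero hd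
  rw [sbmTransition_eq_averaging_add hι hd, averaging_add_smul_blockAveraging_sub_pow ι κ _ ht,
    blockAveraging_eq_smul_blockOnes, averaging, Fintype.card_prod, Nat.cast_mul, mul_pow,
    ← mul_pow_sub_one ht (Fintype.card κ : 𝕜)]
  match_scalars <;> field_simp
  ring

variable [LinearOrder 𝕜] [IsStrictOrderedRing 𝕜]

theorem sbmTransition_mem_rowStochastic (hp : 0 ≤ p) (hq : 0 ≤ q) (hd : sbmDegree ι κ p q ≠ 0) :
    sbmTransition ι κ p q ∈ rowStochastic 𝕜 (ι × κ) := by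
  rw [sbmTransition_eq_inv_smul]
  refine inv_smul_mem_rowStochastic (fun u v => ?_) hd (sum_sbmAdjacency_row p q)
  rw [sbmAdjacency_apply]
  split_ifs <;> assumption

theorem sbm_transition_power_closed_form_general [Nonempty ι] (hp : 0 ≤ p) (hq : 0 ≤ q)
    (hd : sbmDegree ι κ p q ≠ 0) :
    (∀ u, ∑ v, sbmAdjacency ι κ p q u v = sbmDegree ι κ p q) ∧
    sbmTransition ι κ p q = (sbmDegree ι κ p q)⁻¹ • sbmAdjacency ι κ p q ∧
    sbmTransition ι κ p q ∈ rowStochastic 𝕜 (ι × κ) ∧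
    ∀ t : ℕ, 1 ≤ t →
      sbmTransition ι κ p q ^ t =
        ((1 - (Fintype.card κ : 𝕜) ^ t * ((p - q) / sbmDegree ι κ p q) ^ t) /
            (Fintype.card ι * Fintype.card κ)) • allOnes (ι × κ) 𝕜 +
          ((Fintype.card κ : 𝕜) ^ (t - 1) * ((p - q) / sbmDegree ι κ p q) ^ t) •
            blockOnes ι κ 𝕜 :=
  ⟨sum_sbmAdjacency_row p q, sbmTransition_eq_inv_smul, sbmTransition_mem_rowStochastic hp hq hd,
    fun _ ht => sbmTransition_pow (Nat.cast_ne_zero.mpr Fintype.card_ne_zero) hd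
      (Nat.one_le_iff_ne_zero.mp ht)⟩

end SBM

/-- For the expected SBM adjacency matrix `A = q J + (p − q) B` on `n = k s`
nodes, every degree equals `d = s p + (k − 1) s q`, the transition matrix `M = D⁻¹ A = A / d`
is row-stochastic, and for every `t ≥ 1`,
`M^t = c_t J + s^(t−1) ((p − q)/d)^t B` with `c_t = (1 − s^t ((p − q)/d)^t) / n`. -/
theorem sbm_transition_power_closed_form (k s : ℕ) (hk : 1 ≤ k) (hs : 1 ≤ s)
    (p q : ℝ) (hq : 0 ≤ q) (hpq : q < p) (hp : 0 < p)
    (J B A : Matrix (Fin k × Fin s) (Fin k × Fin s) ℝ)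
    (hJ : J = Matrix.of fun _ _ => (1 : ℝ))
    (hB : B = Matrix.of fun u v => if u.1 = v.1 then (1 : ℝ) else 0)
    (hA : A = q • J + (p - q) • B)
    (dval : ℝ) (hd : dval = (s : ℝ) * p + ((k : ℝ) - 1) * (s : ℝ) * q)
    (D : Matrix (Fin k × Fin s) (Fin k × Fin s) ℝ) (hD : D = dval • 1)
    (M : Matrix (Fin k × Fin s) (Fin k × Fin s) ℝ) (hM : M = D⁻¹ * A) :
    (∀ u, ∑ v, A u v = dval) ∧
    M = dval⁻¹ • A ∧
    ((∀ u, ∑ v, M u v = 1) ∧ (∀ u v, 0 ≤ M u v)) ∧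
    (∀ t : ℕ, 1 ≤ t →
      M ^ t = ((1 - (s : ℝ) ^ t * ((p - q) / dval) ^ t) / ((k : ℝ) * (s : ℝ))) • J +
        ((s : ℝ) ^ (t - 1) * ((p - q) / dval) ^ t) • B) := by
  have : NeZero k := ⟨Nat.one_le_iff_ne_zero.mp hk⟩
  have : NeZero s := ⟨Nat.one_le_iff_ne_zero.mp hs⟩
  have hJ' : J = allOnes (Fin k × Fin s) ℝ := hJ
  have hB' : B = blockOnes (Fin k) (Fin s) ℝ := hB
  have hd' : dval = sbmDegree (Fin k) (Fin s) p q := by simp [hd, sbmDegree]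
  have hA' : A = sbmAdjacency (Fin k) (Fin s) p q := by rw [hA, hJ', hB', sbmAdjacency]
  have hM' : M = sbmTransition (Fin k) (Fin s) p q := by rw [hM, hD, hd', hA', sbmTransition]
  obtain ⟨hrow, htransition, hstochastic, hpow⟩ :=
    sbm_transition_power_closed_form_general hp.le hq
      (sbmDegree_pos (ι := Fin k) (κ := Fin s) hp hq).ne'
  rw [hJ', hB', hM', hA', hd']
  exact ⟨hrow, htransition, ⟨sum_row_of_mem_rowStochastic hstochastic, hstochastic.1⟩,
    by simpa only [Fintype.card_fin] using hpow⟩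
end

section
/- (Lemma 1, expected-adjacency form.) Let A = q·J + (p−q)·B be the expected adjacency matrix of a Stochastic Block Model on n = k·s nodes with k ≥ 2 blocks of size s ≥ 1 and densities p > q ≥ 0, p > 0, and let R = (D/vol)(D⁻¹A)^t − d dᵀ/vol² be its Autocovariance matrix for any walk length t ≥ 1. Then for every intra-block pair (u,v) (u, v in the same block) and every inter-block pair (u′,v′) (u′, v′ in different blocks), R_{uv} > R_{u′v′}: the Autocovariance of intra-block pairs is strictly greater than that of inter-block pairs. -/
open Matrix BigOperators

/-!
Averaging over the blocks of a partition is an idempotent matrix, and averaging twice is the same as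
averaging over the coarser partition. With `P` the averaging over the blocks and `Q` the averaging
over all nodes, `P - Q` and `Q` are therefore orthogonal idempotents, and the expected adjacency
matrix is `A = s(p - q) (P - Q) + d Q`. Powers act on the two coefficients separately, and
subtracting `d dᵀ / vol²` removes exactly the `Q` component, so that
`R = n⁻¹ (s(p - q) / d)^t (P - Q)`. The entries of `P` are positive inside the blocks and zero
between them, while those of `Q` are constant.
-/

theorem smul_add_smul_pow_of_isIdempotentElem {K M : Type*} [CommSemiring K] [Semiring M]
    [Algebra K M] {e f : M} (he : IsIdempotentElem e) (hf : IsIdempotentElem f)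
    (hef : e * f = 0) (hfe : f * e = 0) (x y : K) {t : ℕ} (ht : t ≠ 0) :
    (x • e + y • f) ^ t = x ^ t • e + y ^ t • f := by
  induction t, Nat.one_le_iff_ne_zero.mpr ht using Nat.le_induction with
  | base => simp only [pow_one]
  | succ m hm ih =>
    rw [pow_succ, ih (Nat.one_le_iff_ne_zero.mp hm)]
    simp only [add_mul, mul_add, smul_mul_smul_comm, he.eq, hf.eq, hef, hfe, smul_zero, add_zero,
      zero_add, ← pow_succ]

section BlockAverage

open scoped Finset

variable {V κ ι : Type*} [Fintype V] [DecidableEq κ] [DecidableEq ι] (K : Type*) [Field K]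

theorem card_filter_fst_eq {α β : Type*} [Fintype α] [Fintype β] [DecidableEq α] (a : α) :
    #{w : α × β | w.1 = a} = Fintype.card β := by
  have fiber_eq : ({w : α × β | w.1 = a} : Finset (α × β)) = {a} ×ˢ Finset.univ := by
    ext w
    simp only [Finset.mem_filter, Finset.mem_univ, true_and, Finset.mem_product,
      Finset.mem_singleton, and_true]
  rw [fiber_eq, Finset.card_product, Finset.card_singleton, one_mul, Finset.card_univ]

theorem card_block_pos (b : V → κ) (u : V) : 0 < #{w | b w = b u} :=
  Finset.card_pos.mpr ⟨u, Finset.mem_filter.mpr ⟨Finset.mem_univ u, rfl⟩⟩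

/-- The matrix of the operator replacing a function on `V` by its mean over each block, where the
blocks are the fibres of `b : V → κ`. -/
def blockAverage (b : V → κ) : Matrix V V K :=
  Matrix.of fun u v => if b u = b v then (#{w | b w = b u} : K)⁻¹ else 0

/-- The averaging over all of `V`, encoded as the block average with a single block. -/
def totalAverage (V : Type*) [Fintype V] : Matrix V V K :=
  blockAverage K fun _ : V => ()

theorem totalAverage_eq :
    totalAverage K V = (Fintype.card V : K)⁻¹ • Matrix.of fun _ _ => (1 : K) := by
  ext u v
  simp [totalAverage, blockAverage]

theorem transpose_blockAverage (b : V → κ) : (blockAverage K b)ᵀ = blockAverage K b := by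
  ext u v
  by_cases huv : b u = b v
  · simp [blockAverage, huv]
  · simp [blockAverage, huv, Ne.symm huv]

theorem blockAverage_lt_blockAverage [LinearOrder K] [IsStrictOrderedRing K] {b : V → κ}
    {u v u' v' : V} (huv : b u = b v) (huv' : b u' ≠ b v') :
    blockAverage K b u' v' < blockAverage K b u v := by
  simp only [blockAverage, Matrix.of_apply, if_pos huv, if_neg huv']
  exact inv_pos.mpr (Nat.cast_pos.mpr (card_block_pos b u))

variable [CharZero K]

theorem sum_blockAverage (b : V → κ) (u : V) : ∑ w, blockAverage K b u w = 1 := by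
  have hu : (#{w | b w = b u} : K) ≠ 0 := Nat.cast_ne_zero.mpr (card_block_pos b u).ne'
  simp only [blockAverage, Matrix.of_apply, eq_comm (a := b u), ← Finset.sum_filter,
    Finset.sum_const, nsmul_eq_mul, mul_inv_cancel₀ hu]

theorem smul_blockAverage_eq_of_card_eq {b : V → κ} {s : ℕ} (hs : ∀ v, #{w | b w = b v} = s) :
    (s : K) • blockAverage K b = Matrix.of fun u v => if b u = b v then 1 else 0 := by
  ext u v
  have hs0 : (s : K) ≠ 0 := Nat.cast_ne_zero.mpr (hs u ▸ (card_block_pos b u).ne')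
  simp [blockAverage, hs, hs0]

theorem card_smul_totalAverage :
    (Fintype.card V : K) • totalAverage K V = Matrix.of fun _ _ => 1 := by
  simpa only [totalAverage, if_true] using
    smul_blockAverage_eq_of_card_eq K (b := fun _ : V => ()) fun _ => by simp

variable {b : V → κ} {c : V → ι}

theorem blockAverage_mul_of_factorsThrough (hcb : c.FactorsThrough b) :
    blockAverage K b * blockAverage K c = blockAverage K c := by
  ext u v
  have row_eq (w : V) : blockAverage K b u w * blockAverage K c w v =
      blockAverage K b u w * blockAverage K c u v := by
    by_cases huw : b u = b w
    · simp only [blockAverage, Matrix.of_apply, hcb huw]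
    · simp only [blockAverage, Matrix.of_apply, if_neg huw, zero_mul]
  rw [Matrix.mul_apply, Finset.sum_congr rfl fun w _ => row_eq w, ← Finset.sum_mul,
    sum_blockAverage, one_mul]

theorem mul_blockAverage_of_factorsThrough (hcb : c.FactorsThrough b) :
    blockAverage K c * blockAverage K b = blockAverage K c := by
  simpa only [Matrix.transpose_mul, transpose_blockAverage] using
    congrArg Matrix.transpose (blockAverage_mul_of_factorsThrough K hcb)

variable (b)

theorem isIdempotentElem_blockAverage : IsIdempotentElem (blockAverage K b) :=
  blockAverage_mul_of_factorsThrough K fun _ _ h => h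

theorem isIdempotentElem_totalAverage : IsIdempotentElem (totalAverage K V) :=
  isIdempotentElem_blockAverage K _

theorem blockAverage_mul_totalAverage :
    blockAverage K b * totalAverage K V = totalAverage K V :=
  blockAverage_mul_of_factorsThrough K fun _ _ _ => rfl

theorem totalAverage_mul_blockAverage :
    totalAverage K V * blockAverage K b = totalAverage K V :=
  mul_blockAverage_of_factorsThrough K fun _ _ _ => rfl

theorem isIdempotentElem_blockAverage_sub_totalAverage :
    IsIdempotentElem (blockAverage K b - totalAverage K V) := by
  rw [IsIdempotentElem, mul_sub, sub_mul, sub_mul, (isIdempotentElem_blockAverage K b).eq,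
    (isIdempotentElem_totalAverage K).eq, blockAverage_mul_totalAverage,
    totalAverage_mul_blockAverage, sub_self, sub_zero]

theorem smul_blockAverage_sub_totalAverage_add_smul_totalAverage_pow [DecidableEq V]
    (x y : K) {t : ℕ} (ht : t ≠ 0) :
    (x • (blockAverage K b - totalAverage K V) + y • totalAverage K V) ^ t =
      x ^ t • (blockAverage K b - totalAverage K V) + y ^ t • totalAverage K V :=
  smul_add_smul_pow_of_isIdempotentElem (isIdempotentElem_blockAverage_sub_totalAverage K b)
    (isIdempotentElem_totalAverage K)
    (by rw [sub_mul, blockAverage_mul_totalAverage, (isIdempotentElem_totalAverage K).eq, sub_self])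
    (by rw [mul_sub, totalAverage_mul_blockAverage, (isIdempotentElem_totalAverage K).eq, sub_self])
    x y ht

end BlockAverage

section Autocovariance

variable {V K : Type*} [Fintype V] [DecidableEq V] [Field K]

/-- The autocovariance matrix `(D / vol)(D⁻¹A)^t - d dᵀ / vol²` of a weighted graph with adjacency
matrix `A` all of whose degrees equal `d`, so that `D = d I` and `vol = |V| d`. -/
noncomputable def regularAutocovariance (A : Matrix V V K) (d : K) (t : ℕ) : Matrix V V K :=
  (Fintype.card V * d)⁻¹ • ((d • 1) * ((d • 1)⁻¹ * A) ^ t) -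
    ((Fintype.card V * d) ^ 2)⁻¹ • Matrix.of fun _ _ => d * d

theorem regularAutocovariance_eq (A : Matrix V V K) {d : K} (hd : d ≠ 0) (t : ℕ) :
    regularAutocovariance A d t =
      (Fintype.card V : K)⁻¹ • ((d⁻¹ • A) ^ t - totalAverage K V) := by
  have inv_degree : (d • (1 : Matrix V V K))⁻¹ = d⁻¹ • 1 :=
    Matrix.inv_eq_right_inv (by simp [smul_smul, hd])
  have hvol : (Fintype.card V * d)⁻¹ * d = (Fintype.card V : K)⁻¹ := by
    rw [mul_inv, inv_mul_cancel_right₀ hd]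
  have hvol_sq : ((Fintype.card V * d) ^ 2)⁻¹ * (d * d) =
      (Fintype.card V : K)⁻¹ * (Fintype.card V : K)⁻¹ := by
    rw [← hvol]
    ring
  rw [regularAutocovariance, inv_degree, smul_one_mul, smul_one_mul, smul_smul, hvol, smul_sub,
    totalAverage_eq, smul_smul, ← hvol_sq]
  congr 1
  ext u v
  simp

end Autocovariance

section StochasticBlockModel

open scoped Finset

variable {V κ K : Type*} [Fintype V] [DecidableEq κ] [Field K] (b : V → κ)

/-- The expected adjacency matrix `q J + (p - q) B` of the stochastic block model whose blocks are
the fibres of `b`, with intra-block density `p` and inter-block density `q`. -/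
def sbmExpectedAdjacency (p q : K) : Matrix V V K :=
  q • Matrix.of (fun _ _ => 1) + (p - q) • Matrix.of fun u v => if b u = b v then 1 else 0

variable {b} {s : ℕ}

theorem sbmExpectedAdjacency_eq_smul_add_smul [CharZero K] (hs : ∀ v, #{w | b w = b v} = s)
    (p q : K) :
    sbmExpectedAdjacency b p q =
      (s * (p - q)) • (blockAverage K b - totalAverage K V) +
        (s * p + (Fintype.card V - s) * q) • totalAverage K V := by
  rw [sbmExpectedAdjacency, ← smul_blockAverage_eq_of_card_eq K hs, ← card_smul_totalAverage]
  module

theorem sbm_degree_pos [LinearOrder K] [IsStrictOrderedRing K] (hs : ∀ v, #{w | b w = b v} = s)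
    (v : V) {p q : K} (hp : 0 < p) (hq : 0 ≤ q) : 0 < s * p + (Fintype.card V - s) * q := by
  have hs0 : (0 : K) < s := Nat.cast_pos.mpr (hs v ▸ card_block_pos b v)
  have hsn : (s : K) ≤ Fintype.card V := Nat.cast_le.mpr (hs v ▸ Finset.card_le_univ _)
  exact add_pos_of_pos_of_nonneg (mul_pos hs0 hp) (mul_nonneg (sub_nonneg.mpr hsn) hq)

variable [DecidableEq V]

theorem regularAutocovariance_sbmExpectedAdjacency [CharZero K]
    (hs : ∀ v, #{w | b w = b v} = s) {p q d : K}
    (hd : d = s * p + (Fintype.card V - s) * q) (hd0 : d ≠ 0) {t : ℕ} (ht : t ≠ 0) :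
    regularAutocovariance (sbmExpectedAdjacency b p q) d t =
      ((Fintype.card V : K)⁻¹ * (s * (p - q) / d) ^ t) •
        (blockAverage K b - totalAverage K V) := by
  rw [regularAutocovariance_eq _ hd0, sbmExpectedAdjacency_eq_smul_add_smul hs, ← hd, smul_pow,
    smul_blockAverage_sub_totalAverage_add_smul_totalAverage_pow K b _ _ ht, smul_add, smul_smul,
    smul_smul, ← mul_pow, ← mul_pow, inv_mul_cancel₀ hd0, one_pow, one_smul, add_sub_cancel_right,
    smul_smul, inv_mul_eq_div d]

variable [LinearOrder K] [IsStrictOrderedRing K]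

theorem sbm_autocovariance_intra_gt_inter_general (hs : ∀ v, #{w | b w = b v} = s) {p q d : K}
    (hpq : q < p) (hd : d = s * p + (Fintype.card V - s) * q) (hd0 : 0 < d) {t : ℕ} (ht : t ≠ 0)
    {u v u' v' : V} (huv : b u = b v) (huv' : b u' ≠ b v') :
    regularAutocovariance (sbmExpectedAdjacency b p q) d t u' v' <
      regularAutocovariance (sbmExpectedAdjacency b p q) d t u v := by
  have hn : (0 : K) < Fintype.card V := Nat.cast_pos.mpr (Fintype.card_pos_iff.mpr ⟨u⟩)
  have hs0 : (0 : K) < s := Nat.cast_pos.mpr (hs u ▸ card_block_pos b u)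
  have eigenvalue_pos : 0 < (s * (p - q)) / d := div_pos (mul_pos hs0 (sub_pos.mpr hpq)) hd0
  have scale_pos : 0 < (Fintype.card V : K)⁻¹ * (s * (p - q) / d) ^ t :=
    mul_pos (inv_pos.mpr hn) (pow_pos eigenvalue_pos t)
  simp only [regularAutocovariance_sbmExpectedAdjacency hs hd hd0.ne' ht, totalAverage_eq,
    Matrix.smul_apply, Matrix.sub_apply, Matrix.of_apply]
  exact smul_lt_smul_of_pos_left
    (sub_lt_sub_right (blockAverage_lt_blockAverage K huv huv') _) scale_pos

end StochasticBlockModel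

/-- Lemma 1, expected-adjacency form: For the expected SBM adjacency matrix
`A = q J + (p − q) B` on `n = k s` nodes (`k ≥ 2`, `p > q ≥ 0`, `p > 0`) and its Autocovariance
matrix `R = (D / vol)(D⁻¹ A)^t − d dᵀ / vol²` with walk length `t ≥ 1`, every intra-block pair
has a strictly greater Autocovariance score than every inter-block pair. -/
theorem sbm_autocovariance_intra_gt_inter (k s : ℕ) (hk : 2 ≤ k) (hs : 1 ≤ s)
    (p q : ℝ) (hq : 0 ≤ q) (hpq : q < p) (hp : 0 < p)
    (J B A : Matrix (Fin k × Fin s) (Fin k × Fin s) ℝ)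
    (hJ : J = Matrix.of fun _ _ => (1 : ℝ))
    (hB : B = Matrix.of fun u v => if u.1 = v.1 then (1 : ℝ) else 0)
    (hA : A = q • J + (p - q) • B)
    (dval : ℝ) (hd : dval = (s : ℝ) * p + ((k : ℝ) - 1) * (s : ℝ) * q)
    (D : Matrix (Fin k × Fin s) (Fin k × Fin s) ℝ) (hD : D = dval • 1)
    (vol : ℝ) (hvol : vol = ((k : ℝ) * (s : ℝ)) * dval)
    (t : ℕ) (ht : 1 ≤ t)
    (R : Matrix (Fin k × Fin s) (Fin k × Fin s) ℝ)
    (hR : R = vol⁻¹ • (D * (D⁻¹ * A) ^ t) -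
      (vol ^ 2)⁻¹ • Matrix.of (fun _ _ : Fin k × Fin s => dval * dval)) :
    ∀ u v u' v' : Fin k × Fin s, u.1 = v.1 → u'.1 ≠ v'.1 → R u' v' < R u v := by
  have degree_eq : dval = s * p + (Fintype.card (Fin k × Fin s) - s) * q := by
    simp only [hd, Fintype.card_prod, Fintype.card_fin, Nat.cast_mul]
    ring
  have autocovariance_eq :
      R = regularAutocovariance (sbmExpectedAdjacency Prod.fst p q) dval t := by
    simp only [hR, hD, hA, hJ, hB, hvol, regularAutocovariance, sbmExpectedAdjacency,
      Fintype.card_prod, Fintype.card_fin, Nat.cast_mul]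
  have block_card (w : Fin k × Fin s) : Finset.card {x : Fin k × Fin s | x.1 = w.1} = s :=
    (card_filter_fst_eq w.1).trans (Fintype.card_fin s)
  intro u v u' v' huv huv'
  rw [autocovariance_eq]
  exact sbm_autocovariance_intra_gt_inter_general block_card hpq degree_eq
    (degree_eq ▸ sbm_degree_pos block_card u hp hq) (Nat.one_le_iff_ne_zero.mp ht) huv huv'
end
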